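/- If R is a relative m-ovoid of Q⁻(2n+1,q) with respect to 𝒬 and P = ⟨v⟩ is a singular point not contained in H with P ∉ R, then the number of points of R contained in the hyperplane v^⊥ = {w ∈ V : B(v,w) = 0} equals m(qⁿ + 1). -/

import Mathlib

noncomputable section

open Module

variable {F V : Type*} [Field F] [AddCommGroup V] [Module F V]

/-- `P` is a singular point of the quadratic form `Q`, i.e. a `1`-dimensional subspace
spanned by a nonzero singular vector. -/
def IsSingularPoint (Q : QuadraticForm F V) (P : Submodule F V) : Prop :=
  ∃ v : V, v ≠ 0 ∧ Q v = 0 ∧ P = Submodule.span F {v}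

/-- A subspace is totally singular if `Q` vanishes identically on it. -/
def TotallySingular (Q : QuadraticForm F V) (W : Submodule F V) : Prop :=
  ∀ v ∈ W, Q v = 0

/-- A generator is a totally singular subspace of (vector space) dimension `n`. -/
def IsGenerator (Q : QuadraticForm F V) (n : ℕ) (g : Submodule F V) : Prop :=
  TotallySingular Q g ∧ finrank F g = n

/-- The restriction of `Q` to the subspace `U` is nondegenerate. -/
def NondegOn (Q : QuadraticForm F V) (U : Submodule F V) : Prop :=
  ∀ v ∈ U, Q v = 0 → (∀ w ∈ U, QuadraticMap.polar (⇑Q) v w = 0) → v = 0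

/-- The quadratic form `Q` is nondegenerate. -/
def Nondeg (Q : QuadraticForm F V) : Prop :=
  ∀ v : V, Q v = 0 → (∀ w : V, QuadraticMap.polar (⇑Q) v w = 0) → v = 0

/-- `Q` has Witt index `n`: every totally singular subspace has dimension at most `n`
and some totally singular subspace has dimension `n`. -/
def HasWittIndex (Q : QuadraticForm F V) (n : ℕ) : Prop :=
  (∀ W : Submodule F V, TotallySingular Q W → finrank F W ≤ n) ∧
  ∃ W : Submodule F V, TotallySingular Q W ∧ finrank F W = n

/-- A relative `m`-ovoid with respect to the parabolic section cut out by the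
hyperplane `H`: a set `R` of singular points not contained in `H` such that every
generator not contained in `H` contains exactly `m` points of `R`. -/
def IsRelativeMOvoid (Q : QuadraticForm F V) (n : ℕ) (H : Submodule F V) (m : ℕ)
    (R : Set (Submodule F V)) : Prop :=
  (∀ P ∈ R, IsSingularPoint Q P ∧ ¬ P ≤ H) ∧
  ∀ g : Submodule F V, IsGenerator Q n g → ¬ g ≤ H → {P ∈ R | P ≤ g}.ncard = m

/-- The hyperplane `v^⊥ = {w : B(v,w) = 0}`, where `B` is the polar form of `Q`. -/
def vperp (Q : QuadraticForm F V) (v : V) : Submodule F V where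
  carrier := {w | QuadraticMap.polar (⇑Q) v w = 0}
  zero_mem' := QuadraticMap.polar_zero_right Q v
  add_mem' := fun ha hb => by
    simp only [Set.mem_setOf_eq] at *
    rw [QuadraticMap.polar_add_right, ha, hb, add_zero]
  smul_mem' := fun c w hw => by
    simp only [Set.mem_setOf_eq] at *
    rw [QuadraticMap.polar_smul_right, hw, smul_zero]

/-!
Double count the incident pairs consisting of a generator through `v` and a point of `R` on that
generator. Such a generator is not contained in `H`, so it carries `m` points of `R`, all of them in
`v^⊥`; conversely a point `P` of `R` in `v^⊥` spans a totally singular line with `v`. It remains to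
see that the number of generators through a totally singular subspace depends only on its
dimension. Counting pairs `(generator through W, vector of the generator outside W)` reduces this,
by induction on the codimension of `W`, to the number of singular vectors of `W^⊥`. To find that
number, translate a vector `x` of `W^⊥` by a generator `g` through `W`: unless `x` is orthogonal to
`g`, the form `Q` is a nonconstant affine function on `x + g`, so exactly one in `q` vectors of the
coset is singular, while `g` itself contains all the singular vectors orthogonal to `g`.
-/

lemma ncard_mul_eq_ncard_mul {α β : Type*} [Finite α] [Finite β] (r : α → β → Prop) {s : Set α}
    {t : Set β} {a b : ℕ} (ha : ∀ x ∈ s, {y ∈ t | r x y}.ncard = a)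
    (hb : ∀ y ∈ t, {x ∈ s | r x y}.ncard = b) : s.ncard * a = t.ncard * b := by
  classical
  have := Fintype.ofFinite α
  have := Fintype.ofFinite β
  rw [Set.ncard_eq_toFinset_card', Set.ncard_eq_toFinset_card']
  refine Finset.card_mul_eq_card_mul r (fun x hx => ?_) fun y hy => ?_
  · rw [← ha x (Set.mem_toFinset.1 hx), Set.ncard_eq_toFinset_card']
    congr 1
    ext y
    simp [Finset.bipartiteAbove]
  · rw [← hb y (Set.mem_toFinset.1 hy), Set.ncard_eq_toFinset_card']
    congr 1
    ext x
    simp [Finset.bipartiteBelow]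

lemma ncard_coe_submodule [FiniteDimensional F V] (W : Submodule F V) :
    (W : Set V).ncard = Nat.card F ^ finrank F W :=
  Module.natCard_eq_pow_finrank (V := W)

lemma ncard_fiber_mul_card {φ : V →ₗ[F] F} (hφ : φ ≠ 0) (c : F) :
    {x | φ x = c}.ncard * Nat.card F = Nat.card V := by
  have hsurj : Function.Surjective φ := LinearMap.surjective hφ
  have hfiber : {x | φ x = c}.ncard = Nat.card (LinearMap.ker φ) :=
    Nat.card_congr (AddMonoidHom.fiberEquivKerOfSurjective (f := φ.toAddMonoidHom) hsurj c)
  rw [hfiber, Submodule.card_eq_card_quotient_mul_card (LinearMap.ker φ),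
    Nat.card_congr (φ.quotKerEquivOfSurjective hsurj).toEquiv]

lemma finrank_sup_eq_two [FiniteDimensional F V] {P P' : Submodule F V} (hP : finrank F P = 1)
    (hP' : finrank F P' = 1) (hne : P ≠ P') : finrank F ↥(P ⊔ P') = 2 := by
  have hinf : P ⊓ P' < P := lt_of_le_of_ne inf_le_left fun h =>
    hne (Submodule.eq_of_le_of_finrank_eq (inf_eq_left.1 h) (hP.trans hP'.symm))
  have hlt := Submodule.finrank_lt_finrank_of_lt hinf
  have hdim := Submodule.finrank_sup_add_finrank_inf_eq P P'
  omega

/-- The orthogonal subspace `W^⊥` of `W` with respect to the polar form of `Q`. -/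
def perp (Q : QuadraticForm F V) (W : Submodule F V) : Submodule F V :=
  LinearMap.BilinForm.orthogonal Q.polarBilin W

section PolarSpace

-- `e` is the excess `dim V - 2 n`: `0`, `1`, `2` for hyperbolic, parabolic and elliptic quadrics.
variable {Q : QuadraticForm F V} {U W : Submodule F V} {n e : ℕ}

lemma mem_perp {x : V} : x ∈ perp Q W ↔ ∀ w ∈ W, QuadraticMap.polar Q w x = 0 :=
  Iff.rfl

lemma perp_anti (h : U ≤ W) : perp Q W ≤ perp Q U :=
  LinearMap.BilinForm.orthogonal_le h

lemma perp_span_singleton (v : V) : perp Q (Submodule.span F {v}) = vperp Q v := by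
  ext x
  refine ⟨fun hx => hx v (Submodule.mem_span_singleton_self v), fun hx => mem_perp.2 ?_⟩
  intro w hw
  obtain ⟨c, rfl⟩ := Submodule.mem_span_singleton.1 hw
  rw [QuadraticMap.polar_smul_left, show QuadraticMap.polar Q v x = 0 from hx, smul_zero]

namespace TotallySingular

lemma mono (hW : TotallySingular Q W) (h : U ≤ W) : TotallySingular Q U :=
  fun x hx => hW x (h hx)

lemma le_perp (hW : TotallySingular Q W) (h : U ≤ W) : W ≤ perp Q U := by
  refine fun x hx => mem_perp.2 fun u hu => ?_
  rw [QuadraticMap.polar, hW _ (W.add_mem (h hu) hx), hW _ (h hu), hW _ hx, sub_zero, sub_zero]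

lemma sup (hW : TotallySingular Q W) (hU : TotallySingular Q U) (h : U ≤ perp Q W) :
    TotallySingular Q (W ⊔ U) := by
  intro x hx
  obtain ⟨w, hw, u, hu, rfl⟩ := Submodule.mem_sup.1 hx
  rw [QuadraticMap.map_add Q, hW w hw, hU u hu, mem_perp.1 (h hu) w hw, add_zero, add_zero]

lemma span_singleton {x : V} (hx : Q x = 0) : TotallySingular Q (Submodule.span F {x}) := by
  intro y hy
  obtain ⟨c, rfl⟩ := Submodule.mem_span_singleton.1 hy
  rw [QuadraticMap.map_smul, hx, smul_zero]

lemma sup_span_singleton (hW : TotallySingular Q W) {x : V} (hx : x ∈ perp Q W) (hQx : Q x = 0) :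
    TotallySingular Q (W ⊔ Submodule.span F {x}) :=
  hW.sup (span_singleton hQx) ((Submodule.span_singleton_le_iff_mem x _).2 hx)

lemma finrank_add_finrank_perp [FiniteDimensional F V] (hQ : Nondeg Q)
    (hW : TotallySingular Q W) : finrank F W + finrank F (perp Q W) = finrank F V := by
  have hrefl : (Q.polarBilin : LinearMap.BilinForm F V).IsRefl := fun x y hxy => by
    rwa [QuadraticMap.polarBilin_apply_apply, QuadraticMap.polar_comm]
  have hradical : W ⊓ perp Q ⊤ = ⊥ := by
    refine eq_bot_iff.2 fun x ⟨hxW, hx⟩ => hQ x (hW x hxW) fun w => ?_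
    rw [QuadraticMap.polar_comm]
    exact mem_perp.1 hx w Submodule.mem_top
  have h := LinearMap.BilinForm.finrank_add_finrank_orthogonal hrefl W
  rwa [← perp, ← perp, hradical, finrank_bot, add_zero] at h

lemma ncard_singular_coset_mul_card (hU : TotallySingular Q U) {x : V} (hx : x ∉ perp Q U) :
    {u : U | Q (x + u) = 0}.ncard * Nat.card F = Nat.card U := by
  have hφ : (Q.polarBilin x).domRestrict U ≠ 0 := by
    refine fun h => hx (mem_perp.2 fun u hu => ?_)
    rw [QuadraticMap.polar_comm]
    exact LinearMap.congr_fun h ⟨u, hu⟩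
  rw [← ncard_fiber_mul_card hφ (-Q x)]
  congr 2
  ext u
  simp [QuadraticMap.map_add Q, hU u u.2, eq_neg_iff_add_eq_zero, add_comm]

lemma ncard_singular_mul_card [Finite F] [Finite V] (hU : TotallySingular Q U) {X : Set V}
    (hadd : ∀ x ∈ X, ∀ u ∈ U, x + u ∈ X) (hperp : ∀ x ∈ X, x ∉ perp Q U) :
    {x ∈ X | Q x = 0}.ncard * Nat.card F = X.ncard := by
  -- The factor `F` in the index set `U × F` turns the fiber size `|U| / q` into `|U|`.
  have hfiber : ∀ x ∈ X, {p ∈ (Set.univ : Set (U × F)) | Q (x + p.1) = 0}.ncard = Nat.card U := by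
    intro x hx
    rw [← hU.ncard_singular_coset_mul_card (hperp x hx), ← Set.ncard_univ F, ← Set.ncard_prod]
    congr 1
    ext
    simp
  have htranslate : ∀ p ∈ (Set.univ : Set (U × F)),
      {x ∈ X | Q (x + p.1) = 0}.ncard = {x ∈ X | Q x = 0}.ncard := by
    rintro ⟨u, c⟩ -
    rw [← Set.ncard_image_of_injective _ (add_left_injective (u : V))]
    congr 1
    ext y
    refine ⟨?_, fun ⟨hy, hQy⟩ => ⟨y - u, ⟨?_, ?_⟩, sub_add_cancel y (u : V)⟩⟩
    · rintro ⟨x, ⟨hx, hQx⟩, rfl⟩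
      exact ⟨hadd x hx u u.2, hQx⟩
    · simpa [sub_eq_add_neg] using hadd y hy (-u) (neg_mem u.2)
    · rwa [sub_add_cancel]
  have hcount := ncard_mul_eq_ncard_mul _ hfiber htranslate
  rw [Set.ncard_univ, Nat.card_prod] at hcount
  refine Nat.eq_of_mul_eq_mul_right (Nat.card_pos (α := U)) ?_
  rw [hcount]
  ring

end TotallySingular

namespace HasWittIndex

lemma exists_isGenerator_ge [FiniteDimensional F V] (hw : HasWittIndex Q n) (hQ : Nondeg Q)
    (hW : TotallySingular Q W) : ∃ g, IsGenerator Q n g ∧ W ≤ g := by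
  obtain ⟨g, hg, hgn⟩ := hw.2
  have hts : TotallySingular Q (W ⊔ (g ⊓ perp Q W)) := hW.sup (hg.mono inf_le_left) inf_le_right
  refine ⟨W ⊔ (g ⊓ perp Q W), ⟨hts, (hw.1 _ hts).antisymm ?_⟩, le_sup_left⟩
  have hsup : finrank F ↥(g ⊔ perp Q W) ≤ finrank F (perp Q (g ⊓ W)) :=
    Submodule.finrank_mono (sup_le (hg.le_perp inf_le_left) (perp_anti inf_le_right))
  have hinf : finrank F ↥(W ⊓ (g ⊓ perp Q W)) ≤ finrank F ↥(g ⊓ W) :=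
    Submodule.finrank_mono (le_inf (inf_le_right.trans inf_le_left) inf_le_left)
  have hdim := Submodule.finrank_sup_add_finrank_inf_eq W (g ⊓ perp Q W)
  have hdim' := Submodule.finrank_sup_add_finrank_inf_eq g (perp Q W)
  have hperp := hW.finrank_add_finrank_perp hQ
  have hperp' := (hW.mono (inf_le_right : g ⊓ W ≤ W)).finrank_add_finrank_perp hQ
  omega

lemma singular_perp_eq [FiniteDimensional F V] (hw : HasWittIndex Q n) {g : Submodule F V}
    (hg : IsGenerator Q n g) : {x ∈ perp Q g | Q x = 0} = (g : Set V) := by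
  refine Set.Subset.antisymm (fun x ⟨hx, hQx⟩ => ?_) fun x hx => ⟨hg.1.le_perp le_rfl hx, hg.1 x hx⟩
  by_contra hxg
  have hle := hw.1 _ (hg.1.sup_span_singleton hx hQx)
  rw [Submodule.finrank_sup_span_singleton hxg, hg.2] at hle
  omega

lemma ncard_singular_perp [Finite F] [Finite V] (hw : HasWittIndex Q n) (hQ : Nondeg Q)
    (hV : finrank F V = 2 * n + e) (hW : TotallySingular Q W) {r : ℕ} (hr : finrank F W + r = n) :
    {x ∈ perp Q W | Q x = 0}.ncard * Nat.card F + Nat.card F ^ (n + e) =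
      Nat.card F ^ (n + 1) + Nat.card F ^ (n + e + r) := by
  obtain ⟨g, hg, hWg⟩ := hw.exists_isGenerator_ge hQ hW
  have hsub : perp Q g ≤ perp Q W := perp_anti hWg
  have hsingular : {x ∈ (perp Q W : Set V) \ perp Q g | Q x = 0}.ncard * Nat.card F =
      ((perp Q W : Set V) \ perp Q g).ncard := by
    refine hg.1.ncard_singular_mul_card (fun x ⟨hxW, hxg⟩ u hu => ⟨?_, ?_⟩) fun x hx => hx.2
    · exact add_mem hxW (hg.1.le_perp hWg hu)
    · exact fun h => hxg (((perp Q g).add_mem_iff_left (hg.1.le_perp le_rfl hu)).1 h)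
  have hsplit : {x ∈ (perp Q W : Set V) \ perp Q g | Q x = 0}.ncard + Nat.card F ^ n =
      {x ∈ perp Q W | Q x = 0}.ncard := by
    rw [← hg.2, ← ncard_coe_submodule, ← hw.singular_perp_eq hg,
      ← Set.ncard_sdiff_add_ncard_of_subset (s := {x ∈ perp Q g | Q x = 0})
        (t := {x ∈ perp Q W | Q x = 0}) fun x hx => ⟨hsub hx.1, hx.2⟩]
    congr 2
    ext x
    simp only [Set.mem_ofPred_eq, Set.mem_sdiff, SetLike.mem_coe]
    tauto
  have hperp := Set.ncard_sdiff_add_ncard_of_subset (SetLike.coe_subset_coe.2 hsub)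
  have hdimW := hW.finrank_add_finrank_perp hQ
  have hdimg := hg.1.finrank_add_finrank_perp hQ
  rw [ncard_coe_submodule, ncard_coe_submodule,
    show finrank F (perp Q g) = n + e by have := hg.2; omega,
    show finrank F (perp Q W) = n + e + r by omega] at hperp
  rw [← hsplit, add_mul, hsingular, ← hperp]
  ring

lemma ncard_singular_perp_sdiff [Finite F] [Finite V] (hw : HasWittIndex Q n) (hQ : Nondeg Q)
    (hV : finrank F V = 2 * n + e) (hW : TotallySingular Q W) {r : ℕ}
    (hr : finrank F W + (r + 1) = n) :
    ({x ∈ perp Q W | Q x = 0} \ W).ncard =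
      (Nat.card F ^ n - Nat.card F ^ finrank F W) * (Nat.card F ^ (e + r) + 1) := by
  have hle : Nat.card F ^ finrank F W ≤ Nat.card F ^ n :=
    Nat.pow_le_pow_right Nat.card_pos (by omega)
  have hsub : (W : Set V) ⊆ {x ∈ perp Q W | Q x = 0} :=
    fun x hx => ⟨hW.le_perp le_rfl hx, hW x hx⟩
  have hsplit := Set.ncard_sdiff_add_ncard_of_subset hsub
  have hcount := hw.ncard_singular_perp hQ hV hW hr
  rw [← hsplit, ncard_coe_submodule] at hcount
  refine Nat.eq_of_mul_eq_mul_right (Nat.card_pos (α := F)) ?_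
  zify [hle] at hcount ⊢
  rw [← hr] at hcount ⊢
  linear_combination hcount

lemma ncard_isGenerator_ge [Finite F] [Finite V] (hw : HasWittIndex Q n) (hQ : Nondeg Q)
    (hV : finrank F V = 2 * n + e) (hW : TotallySingular Q W) {r : ℕ} (hr : finrank F W + r = n) :
    {g | IsGenerator Q n g ∧ W ≤ g}.ncard = ∏ i ∈ Finset.range r, (Nat.card F ^ (e + i) + 1) := by
  induction r generalizing W with
  | zero =>
    rw [Finset.prod_range_zero, Set.ncard_eq_one]
    refine ⟨W, Set.eq_singleton_iff_unique_mem.2 ⟨⟨⟨hW, hr⟩, le_rfl⟩, fun g ⟨hg, hWg⟩ => ?_⟩⟩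
    exact (Submodule.eq_of_le_of_finrank_eq hWg (hr.trans hg.2.symm)).symm
  | succ r ih =>
    have hvectors : ∀ g ∈ {g | IsGenerator Q n g ∧ W ≤ g},
        {x ∈ {x ∈ perp Q W | Q x = 0} \ W | x ∈ g}.ncard =
          Nat.card F ^ n - Nat.card F ^ finrank F W := by
      rintro g ⟨hg, hWg⟩
      rw [← hg.2, ← ncard_coe_submodule, ← ncard_coe_submodule, ← Set.ncard_sdiff hWg]
      congr 1
      ext x
      exact ⟨fun ⟨⟨_, hxW⟩, hxg⟩ => ⟨hxg, hxW⟩,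
        fun ⟨hxg, hxW⟩ => ⟨⟨⟨hg.1.le_perp hWg hxg, hg.1 x hxg⟩, hxW⟩, hxg⟩⟩
    have hgenerators : ∀ x ∈ {x ∈ perp Q W | Q x = 0} \ W,
        {g ∈ {g | IsGenerator Q n g ∧ W ≤ g} | x ∈ g}.ncard =
          ∏ i ∈ Finset.range r, (Nat.card F ^ (e + i) + 1) := by
      rintro x ⟨⟨hx, hQx⟩, hxW⟩
      have hdim := Submodule.finrank_sup_span_singleton hxW
      rw [← ih (hW.sup_span_singleton hx hQx) (by omega)]
      simp only [Set.mem_ofPred_eq, sup_le_iff, Submodule.span_singleton_le_iff_mem, and_assoc]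
    have hcount := ncard_mul_eq_ncard_mul _ hvectors hgenerators
    rw [hw.ncard_singular_perp_sdiff hQ hV hW hr] at hcount
    have hlt : Nat.card F ^ finrank F W < Nat.card F ^ n :=
      Nat.pow_lt_pow_right Finite.one_lt_card (by omega)
    refine Nat.eq_of_mul_eq_mul_right (Nat.sub_pos_of_lt hlt) ?_
    rw [hcount, Finset.prod_range_succ]
    ring

end HasWittIndex

lemma IsRelativeMOvoid.ncard_le_vperp_le_generator {H g : Submodule F V} {m : ℕ}
    {R : Set (Submodule F V)} (hR : IsRelativeMOvoid Q n H m R) (hg : IsGenerator Q n g) {v : V}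
    (hvg : v ∈ g) (hvH : v ∉ H) : {P ∈ {P ∈ R | P ≤ vperp Q v} | P ≤ g}.ncard = m := by
  have hle : g ≤ vperp Q v := by
    rw [← perp_span_singleton]
    exact hg.1.le_perp ((Submodule.span_singleton_le_iff_mem v g).2 hvg)
  rw [← hR.2 g hg fun hgH => hvH (hgH hvg)]
  congr 1
  ext P
  exact ⟨fun ⟨⟨hPR, _⟩, hPg⟩ => ⟨hPR, hPg⟩, fun ⟨hPR, hPg⟩ => ⟨⟨hPR, hPg.trans hle⟩, hPg⟩⟩

lemma IsSingularPoint.totallySingular_sup {P : Submodule F V} (hP : IsSingularPoint Q P) {v : V}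
    (hQv : Q v = 0) (hPv : P ≤ vperp Q v) : TotallySingular Q (Submodule.span F {v} ⊔ P) := by
  obtain ⟨x, -, hQx, rfl⟩ := hP
  rw [← perp_span_singleton] at hPv
  exact (TotallySingular.span_singleton hQv).sup (TotallySingular.span_singleton hQx) hPv

lemma IsSingularPoint.finrank_eq_one {P : Submodule F V} (hP : IsSingularPoint Q P) :
    finrank F P = 1 := by
  obtain ⟨x, hx, -, rfl⟩ := hP
  exact finrank_span_singleton hx

theorem statement_6_general [Finite F] [Finite V] (hn : 2 ≤ n) (hV : finrank F V = 2 * n + e)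
    (hQ : Nondeg Q) (hw : HasWittIndex Q n) {H : Submodule F V} {m : ℕ} {R : Set (Submodule F V)}
    (hR : IsRelativeMOvoid Q n H m R) {v : V} (hv0 : v ≠ 0) (hvQ : Q v = 0) (hvH : v ∉ H)
    (hvR : Submodule.span F {v} ∉ R) :
    {P ∈ R | P ≤ vperp Q v}.ncard = m * (Nat.card F ^ (n + e - 2) + 1) := by
  obtain ⟨k, rfl⟩ := Nat.exists_eq_add_of_le' hn
  have hv : finrank F (Submodule.span F {v}) = 1 := finrank_span_singleton hv0
  have hpoints : ∀ g ∈ {g | IsGenerator Q (k + 2) g ∧ Submodule.span F {v} ≤ g},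
      {P ∈ {P ∈ R | P ≤ vperp Q v} | P ≤ g}.ncard = m := fun g ⟨hg, hvg⟩ =>
    hR.ncard_le_vperp_le_generator hg ((Submodule.span_singleton_le_iff_mem v g).1 hvg) hvH
  have hgenerators : ∀ P ∈ {P ∈ R | P ≤ vperp Q v},
      {g ∈ {g | IsGenerator Q (k + 2) g ∧ Submodule.span F {v} ≤ g} | P ≤ g}.ncard =
        ∏ i ∈ Finset.range k, (Nat.card F ^ (e + i) + 1) := by
    rintro P ⟨hPR, hPv⟩
    have hP : IsSingularPoint Q P := (hR.1 P hPR).1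
    have hdim := finrank_sup_eq_two hv hP.finrank_eq_one (ne_of_mem_of_not_mem hPR hvR).symm
    rw [← hw.ncard_isGenerator_ge hQ hV (hP.totallySingular_sup hvQ hPv) (by omega)]
    simp only [Set.mem_ofPred_eq, sup_le_iff, and_assoc]
  have hcount := ncard_mul_eq_ncard_mul _ hpoints hgenerators
  rw [hw.ncard_isGenerator_ge hQ hV (.span_singleton hvQ) (r := k + 1) (by omega),
    Finset.prod_range_succ] at hcount
  have hpos : 0 < ∏ i ∈ Finset.range k, (Nat.card F ^ (e + i) + 1) :=
    Finset.prod_pos fun i _ => Nat.succ_pos _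
  refine Nat.eq_of_mul_eq_mul_right hpos ?_
  rw [← hcount, show k + 2 + e - 2 = e + k by omega]
  ring

end PolarSpace

/-- If `P = ⟨v⟩` is a singular point not in `H` and not in the relative `m`-ovoid `R`,
then `v^⊥` contains exactly `m(qⁿ + 1)` points of `R`. -/
theorem statement_6
    (q n : ℕ) [Fintype F] (hq : Fintype.card F = q) (hn : 2 ≤ n)
    (hV : finrank F V = 2 * n + 2)
    (Q : QuadraticForm F V) (hQnd : Nondeg Q) (hQw : HasWittIndex Q n)
    (H : Submodule F V) (hH : finrank F H = 2 * n + 1) (hHnd : NondegOn Q H)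
    (m : ℕ) (R : Set (Submodule F V)) (hR : IsRelativeMOvoid Q n H m R)
    (v : V) (hv0 : v ≠ 0) (hvQ : Q v = 0) (hvH : v ∉ H)
    (hvR : Submodule.span F {v} ∉ R) :
    {P ∈ R | P ≤ vperp Q v}.ncard = m * (q ^ n + 1) := by
  have : FiniteDimensional F V := FiniteDimensional.of_finrank_pos (by omega)
  have : Finite V := Module.finite_of_finite F
  simpa [hq] using statement_6_general hn hV hQnd hQw hR hv0 hvQ hvH hvR
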